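/- arXiv:2602.02205 — 4 statements merged into one kernel-verified Lean document; each statement's English description precedes it below -/
import Mathlib

section
/- The extended internal energy function η : ℝ × ℝ → [0,∞] defined by η(ρ,S) = c_v · ρ^γ · exp(S/(c_v ρ)) if ρ > 0, η(ρ,S) = 0 if ρ = 0 and S ≤ 0, and η(ρ,S) = +∞ otherwise, is a convex function on ℝ². -/
/-!
Put `k = γ - 1` and `u(ρ, S) = k (S / ρ + log ρ)`. For `ρ > 0` the energy is `ρ exp (u(ρ, S)) / k`.
Convexity follows because at each point with `ρ > 0` the energy has an affine minorant on all of
`ℝ²` that is exact at that point (`internalEnergy_tangent_le`): the bound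
`exp v ≥ exp u * (1 + v - u)` linearizes the exponential, and `r log (r / ρ) ≥ r - ρ` linearizes
what remains. If a convex combination has first coordinate `≤ 0` and both endpoint energies are
finite, both endpoints lie on the half-line `ρ = 0, S ≤ 0`, where the energy vanishes.
-/

open scoped ENNReal

/-- The extended internal energy `η(ρ, S)` for a polytropic gas with adiabatic exponent `γ`,
where `c_v = 1/(γ-1)`; values in `[0, ∞]`. -/
noncomputable def internalEnergy (γ : ℝ) (p : ℝ × ℝ) : ℝ≥0∞ :=
  if 0 < p.1 then
    ENNReal.ofReal ((1 / (γ - 1)) * p.1 ^ γ * Real.exp (p.2 / ((1 / (γ - 1)) * p.1)))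
  else if p.1 = 0 ∧ p.2 ≤ 0 then 0
  else ⊤

theorem internalEnergy_of_pos (γ : ℝ) (hγ : 1 < γ) (r s : ℝ) (hr : 0 < r) :
    internalEnergy γ (r, s) =
      ENNReal.ofReal (r * Real.exp ((γ - 1) * (s / r + Real.log r)) / (γ - 1)) := by
  have hk : 0 < γ - 1 := by linarith
  unfold internalEnergy
  rw [if_pos hr]
  congr 1
  have h1 : r ^ γ = r * Real.exp ((γ - 1) * Real.log r) := by
    conv_rhs => rw [← Real.exp_log hr, Real.log_exp, ← Real.exp_add]
    rw [Real.rpow_def_of_pos hr]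
    congr 1
    ring
  have h2 : s / (1 / (γ - 1) * r) = (γ - 1) * (s / r) := by
    field_simp
  dsimp only
  rw [h1, h2, mul_add, Real.exp_add]
  ring

/-- The affine function tangent at `(ρ, S)`, `ρ > 0`, to the internal energy, evaluated at `p`. -/
noncomputable def energyTangent (γ ρ S : ℝ) (p : ℝ × ℝ) : ℝ :=
  Real.exp ((γ - 1) * (S / ρ + Real.log ρ)) / (γ - 1) *
    (p.1 + (γ - 1) * (p.2 - S / ρ * p.1 + p.1 - ρ))

theorem internalEnergy_tangent_le (γ : ℝ) (hγ : 1 < γ) (ρ S : ℝ) (hρ : 0 < ρ) (p : ℝ × ℝ) :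
    ENNReal.ofReal (energyTangent γ ρ S p) ≤ internalEnergy γ p := by
  have hk : 0 < γ - 1 := by linarith
  obtain ⟨r, s⟩ := p
  unfold energyTangent
  by_cases hr : 0 < r
  · rw [internalEnergy_of_pos γ hγ r s hr]
    apply ENNReal.ofReal_le_ofReal
    dsimp only
    set u := (γ - 1) * (S / ρ + Real.log ρ) with hu
    set v := (γ - 1) * (s / r + Real.log r) with hv
    have h1 : Real.exp u * (1 + (v - u)) ≤ Real.exp v := by
      have := Real.add_one_le_exp (v - u)
      calc Real.exp u * (1 + (v - u)) ≤ Real.exp u * Real.exp (v - u) := by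
            gcongr; linarith
        _ = Real.exp v := by rw [← Real.exp_add]; congr 1; ring
    have h2 : r - ρ ≤ r * (Real.log r - Real.log ρ) := by
      have h := Real.log_le_sub_one_of_pos (div_pos hρ hr)
      rw [Real.log_div hρ.ne' hr.ne'] at h
      have h' := mul_le_mul_of_nonneg_left h hr.le
      have h'' : r * (ρ / r - 1) = ρ - r := by field_simp
      linarith
    have h3 : r + (γ - 1) * (s - S / ρ * r + r - ρ) ≤ r * (1 + (v - u)) := by
      have h4 : r * (1 + (v - u)) =
          r + (γ - 1) * (s - S / ρ * r + r * (Real.log r - Real.log ρ)) := by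
        rw [hu, hv]; field_simp; ring
      rw [h4]
      have := mul_le_mul_of_nonneg_left h2 hk.le
      linarith
    calc Real.exp u / (γ - 1) * (r + (γ - 1) * (s - S / ρ * r + r - ρ))
        ≤ Real.exp u / (γ - 1) * (r * (1 + (v - u))) := by gcongr
      _ = r * (Real.exp u * (1 + (v - u))) / (γ - 1) := by ring
      _ ≤ r * Real.exp v / (γ - 1) := by gcongr
  · by_cases h0 : r = 0 ∧ s ≤ 0
    · obtain ⟨rfl, hs⟩ := h0
      rw [ENNReal.ofReal_of_nonpos]
      · exact zero_le
      · apply mul_nonpos_of_nonneg_of_nonpos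
        · positivity
        · have : (γ - 1) * (s - ρ) ≤ 0 :=
            mul_nonpos_of_nonneg_of_nonpos hk.le (by linarith)
          dsimp only
          linarith
    · simp [internalEnergy, hr, h0]

theorem domain_of_ne_top {γ : ℝ} {p : ℝ × ℝ} (h : internalEnergy γ p ≠ ⊤) :
    0 < p.1 ∨ (p.1 = 0 ∧ p.2 ≤ 0) := by
  by_contra hc
  push Not at hc
  apply h
  unfold internalEnergy
  rw [if_neg hc.1.not_gt, if_neg fun h => (hc.2 h.1).not_ge h.2]

/-- the extended internal energy is convex on `ℝ²`,
with the convex-combination structure of `[0,∞]`. -/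
theorem internalEnergy_convex (γ : ℝ) (hγ : 1 < γ) :
    ∀ x y : ℝ × ℝ, ∀ a : ℝ, 0 ≤ a → a ≤ 1 →
      internalEnergy γ (a • x + (1 - a) • y) ≤
        ENNReal.ofReal a * internalEnergy γ x + ENNReal.ofReal (1 - a) * internalEnergy γ y := by
  intro x y a ha0 ha1
  rcases ha0.eq_or_lt with rfl | ha
  · simp
  rcases ha1.eq_or_lt with rfl | hb
  · simp
  have hb' : 0 < 1 - a := by linarith
  by_cases hx : internalEnergy γ x = ⊤
  · rw [hx, ENNReal.mul_top (by simpa using ha)]; simp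
  by_cases hy : internalEnergy γ y = ⊤
  · rw [hy, ENNReal.mul_top (by simpa using hb)]; simp
  have dx := domain_of_ne_top hx
  have dy := domain_of_ne_top hy
  by_cases hpos : 0 < a * x.1 + (1 - a) * y.1
  · set ρ := a * x.1 + (1 - a) * y.1 with hρ
    set S := a * x.2 + (1 - a) * y.2 with hS
    have hp : a • x + (1 - a) • y = (ρ, S) := by
      ext <;> simp [hρ, hS]
    have hL : ρ * Real.exp ((γ - 1) * (S / ρ + Real.log ρ)) / (γ - 1) =
        a * energyTangent γ ρ S x + (1 - a) * energyTangent γ ρ S y := by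
      -- The tangent function is affine, and its bracket at `(ρ, S)` reduces to `ρ`.
      have h1 : a * energyTangent γ ρ S x + (1 - a) * energyTangent γ ρ S y =
          Real.exp ((γ - 1) * (S / ρ + Real.log ρ)) / (γ - 1) *
            (ρ + (γ - 1) * (S - S / ρ * ρ + ρ - ρ)) := by
        unfold energyTangent
        generalize Real.exp ((γ - 1) * (S / ρ + Real.log ρ)) / (γ - 1) = E
        generalize S / ρ = q
        rw [hS]
        linear_combination (-E * (1 + (γ - 1) * (1 - q))) * hρ + E * (γ - 1) * hρ
      rw [h1, div_mul_cancel₀ _ hpos.ne']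
      ring
    rw [hp, internalEnergy_of_pos γ hγ ρ S hpos, hL]
    refine ENNReal.ofReal_add_le.trans ?_
    rw [ENNReal.ofReal_mul ha0, ENNReal.ofReal_mul hb'.le]
    gcongr
    · exact internalEnergy_tangent_le γ hγ ρ S hpos x
    · exact internalEnergy_tangent_le γ hγ ρ S hpos y
  · have hz : (x.1 = 0 ∧ x.2 ≤ 0) ∧ (y.1 = 0 ∧ y.2 ≤ 0) := by
      rcases dx with h | h <;> rcases dy with h' | h'
      · exact absurd (by positivity) hpos
      · exact absurd (by rw [h'.1]; simpa using mul_pos ha h) hpos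
      · exact absurd (by rw [h.1]; simpa using mul_pos hb' h') hpos
      · exact ⟨h, h'⟩
    obtain ⟨⟨hx1, hx2⟩, hy1, hy2⟩ := hz
    have hS : a * x.2 + (1 - a) * y.2 ≤ 0 :=
      add_nonpos (mul_nonpos_of_nonneg_of_nonpos ha0 hx2)
        (mul_nonpos_of_nonneg_of_nonpos hb'.le hy2)
    have h0 : internalEnergy γ (a • x + (1 - a) • y) = 0 := by
      simp [internalEnergy, hx1, hy1, hS]
    rw [h0]
    exact zero_le
end

section
/- The extended internal energy function η : ℝ × ℝ → [0,∞] defined by η(ρ,S) = c_v · ρ^γ · exp(S/(c_v ρ)) if ρ > 0, η(ρ,S) = 0 if ρ = 0 and S ≤ 0, and η(ρ,S) = +∞ otherwise, is lower semicontinuous on ℝ². -/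
/-!
Where `ρ > 0` the energy is continuous, on `ρ < 0` it is locally constant equal to `∞`, and at
`(0, S)` with `S ≤ 0` it takes its minimal value `0`. The remaining points are `(0, S)` with
`S > 0`: for `(ρ', S')` near such a point either `ρ' ≤ 0` and the energy is `∞`, or `ρ' > 0` and
`S' > S / 2`, so the energy is at least `c_v ρ' ^ γ exp (S / (2 c_v ρ'))`, which blows up as
`ρ' → 0⁺` because the exponential beats every power (`tendsto_rpow_mul_exp_div_nhdsGT_zero`).
-/

open scoped ENNReal

open Filter Topology

theorem tendsto_rpow_mul_exp_div_nhdsGT_zero (γ : ℝ) {a : ℝ} (ha : 0 < a) :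
    Tendsto (fun r : ℝ => r ^ γ * Real.exp (a / r)) (𝓝[>] 0) atTop := by
  refine ((tendsto_exp_mul_div_rpow_atTop γ a ha).comp tendsto_inv_nhdsGT_zero).congr' ?_
  filter_upwards [self_mem_nhdsWithin] with r (hr : 0 < r)
  simp only [Function.comp, Real.inv_rpow hr.le, div_inv_eq_mul, div_eq_mul_inv a r]
  ring

/-- the extended internal energy is lower semicontinuous on `ℝ²`. -/
theorem internalEnergy_lowerSemicontinuous (γ : ℝ) (hγ : 1 < γ) :
    LowerSemicontinuous (internalEnergy γ) := by
  have hc : 0 < 1 / (γ - 1) := by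
    have : 0 < γ - 1 := by linarith
    positivity
  rintro ⟨ρ, S⟩ y hy
  rcases lt_trichotomy ρ 0 with hρ | rfl | hρ
  · have hev : ∀ᶠ q : ℝ × ℝ in 𝓝 (ρ, S), q.1 < 0 :=
      continuous_fst.continuousAt.eventually_lt_const hρ
    filter_upwards [hev] with q hq
    have hq' : internalEnergy γ q = ⊤ := by
      simp [internalEnergy, hq.not_gt, hq.ne]
    have hp : internalEnergy γ (ρ, S) = ⊤ := by
      simp [internalEnergy, hρ.not_gt, hρ.ne]
    rwa [hq', ← hp]
  · rcases le_or_gt S 0 with hS | hS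
    · simp [internalEnergy, hS] at hy
    have hy' : y < ⊤ := lt_of_lt_of_le hy le_top
    have ha : 0 < S / 2 / (1 / (γ - 1)) := by positivity
    have hlim := (tendsto_rpow_mul_exp_div_nhdsGT_zero γ ha).const_mul_atTop hc
    have h1 : ∀ᶠ r : ℝ in 𝓝 0, 0 < r → y.toReal <
        1 / (γ - 1) * (r ^ γ * Real.exp (S / 2 / (1 / (γ - 1)) / r)) :=
      eventually_nhdsWithin_iff.1 (hlim.eventually_gt_atTop y.toReal)
    have h2 : ∀ᶠ q : ℝ × ℝ in 𝓝 (0, S), S / 2 < q.2 :=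
      continuous_snd.continuousAt.eventually_const_lt (half_lt_self hS)
    filter_upwards [(continuous_fst.tendsto ((0 : ℝ), S)).eventually h1, h2] with q hq1 hq2
    by_cases hq : 0 < q.1
    · rw [internalEnergy, if_pos hq, gt_iff_lt, ENNReal.lt_ofReal_iff_toReal_lt hy'.ne]
      refine (hq1 hq).trans_le ?_
      rw [mul_assoc, div_div (S / 2)]
      gcongr
    · have hq2' : 0 < q.2 := (half_pos hS).trans hq2
      simpa [internalEnergy, hq, hq2'.not_ge] using hy'
  · have hev : ∀ᶠ q : ℝ × ℝ in 𝓝 (ρ, S), 0 < q.1 :=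
      continuous_fst.continuousAt.eventually_const_lt hρ
    have hcont : ContinuousAt (fun q : ℝ × ℝ => ENNReal.ofReal
        ((1 / (γ - 1)) * q.1 ^ γ * Real.exp (q.2 / ((1 / (γ - 1)) * q.1)))) (ρ, S) := by
      refine ENNReal.continuous_ofReal.continuousAt.comp ?_
      refine (continuousAt_const.mul
        (continuous_fst.continuousAt.rpow_const (Or.inl hρ.ne'))).mul ?_
      exact Real.continuous_exp.continuousAt.comp (continuous_snd.continuousAt.div
        (continuousAt_const.mul continuous_fst.continuousAt) (mul_pos hc hρ).ne')
    rw [internalEnergy, if_pos hρ] at hy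
    filter_upwards [hev, hcont.eventually_const_lt hy] with q hq hlt
    rwa [internalEnergy, if_pos hq]
end

section
/- The extended total energy E : ℝ × ℝ^d × ℝ → [0,∞], defined by E(ρ,m,S) = |m|²/(2ρ) + c_v · ρ^γ · exp(S/(c_v ρ)) if ρ > 0, E(ρ,m,S) = 0 if ρ = 0, m = 0 and S ≤ 0, and E(ρ,m,S) = +∞ otherwise, is a convex and lower semicontinuous function on ℝ^{d+2}. -/
/-!
The energy is the supremum of the positive parts of a family of affine functions, and such a
supremum is convex and lower semicontinuous.

With `k = γ - 1`, the energy at `ρ > 0` is `|m|²/(2ρ) + k⁻¹ ρ exp (k (ρ log ρ + S) / ρ)`. Three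
tangent inequalities bound it from below by affine functions:
* `|m|²/(2ρ) ≥ ⟪v, m⟫ - ρ|v|²/2`, with equality at `v = m/ρ`;
* `ρ exp (k w / ρ) ≥ exp (k t) ((1 - k t) ρ + k w)`, with equality at `t = w/ρ`;
* `ρ log ρ ≥ ρ (1 + u) - exp u`, with equality at `u = log ρ`.

Their combination is `affineMinorant`. At `ρ = 0`, `m = 0`, `S ≤ 0` all minorants are nonpositive,
and at every other point with `ρ ≤ 0` they are unbounded above, so the supremum also reproduces the
boundary values of the energy (`totalEnergy_eq_iSup`).
-/

open Classical

open scoped ENNReal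

/-- The extended total energy `E(ρ, m, S)` of the Euler system, with values in `[0, ∞]`;
here `γ` is the adiabatic exponent and `c_v = 1/(γ-1)`. -/
noncomputable def totalEnergy (d : ℕ) (γ : ℝ) (p : ℝ × EuclideanSpace ℝ (Fin d) × ℝ) : ℝ≥0∞ :=
  if 0 < p.1 then
    ENNReal.ofReal (‖p.2.1‖ ^ 2 / (2 * p.1) +
      (1 / (γ - 1)) * p.1 ^ γ * Real.exp (p.2.2 / ((1 / (γ - 1)) * p.1)))
  else if p.1 = 0 ∧ p.2.1 = 0 ∧ p.2.2 ≤ 0 then 0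
  else ⊤

/-- The affine minorant of the energy, as a function of `p = (ρ, m, S)`, with slopes given by the
velocity `v`, by `t` (the value of `log ρ + S/ρ` at the point of tangency) and by `u` (the value of
`log ρ` there). Here `k` stands for `γ - 1`. -/
noncomputable def affineMinorant {d : ℕ} (k : ℝ) (q : EuclideanSpace ℝ (Fin d) × ℝ × ℝ)
    (p : ℝ × EuclideanSpace ℝ (Fin d) × ℝ) : ℝ :=
  inner ℝ q.1 p.2.1 - p.1 * ‖q.1‖ ^ 2 / 2 +
    (1 / k) * Real.exp (k * q.2.1) *
      ((1 - k * q.2.1) * p.1 + k * (p.2.2 + p.1 * (1 + q.2.2) - Real.exp q.2.2))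

lemma affineMinorant_combo {d : ℕ} (k : ℝ) (q : EuclideanSpace ℝ (Fin d) × ℝ × ℝ)
    (x y : ℝ × EuclideanSpace ℝ (Fin d) × ℝ) (a : ℝ) :
    affineMinorant k q (a • x + (1 - a) • y) =
      a * affineMinorant k q x + (1 - a) * affineMinorant k q y := by
  simp only [affineMinorant, Prod.fst_add, Prod.snd_add, Prod.smul_fst, Prod.smul_snd,
    inner_add_right, real_inner_smul_right, smul_eq_mul]
  ring

lemma continuous_affineMinorant {d : ℕ} (k : ℝ) (q : EuclideanSpace ℝ (Fin d) × ℝ × ℝ) :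
    Continuous (affineMinorant k q) := by
  unfold affineMinorant
  fun_prop

lemma internalEnergy_eq {γ ρ S : ℝ} (hγ : 1 < γ) (hρ : 0 < ρ) :
    (1 / (γ - 1)) * ρ ^ γ * Real.exp (S / ((1 / (γ - 1)) * ρ)) =
      (1 / (γ - 1)) * (ρ * Real.exp ((γ - 1) * (Real.log ρ + S / ρ))) := by
  have hk : γ - 1 ≠ 0 := by linarith
  have h1 : ρ ^ γ = ρ * Real.exp ((γ - 1) * Real.log ρ) := by
    rw [Real.rpow_def_of_pos hρ]
    nth_rewrite 2 [← Real.exp_log hρ]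
    rw [← Real.exp_add]
    ring_nf
  have h2 : S / ((1 / (γ - 1)) * ρ) = (γ - 1) * (S / ρ) := by field_simp
  rw [h1, h2, mul_add, Real.exp_add]
  ring

lemma kinetic_minorant {d : ℕ} {ρ : ℝ} (hρ : 0 < ρ) (v m : EuclideanSpace ℝ (Fin d)) :
    inner ℝ v m - ρ * ‖v‖ ^ 2 / 2 ≤ ‖m‖ ^ 2 / (2 * ρ) := by
  have h := real_inner_le_norm v m
  rw [le_div_iff₀ (by positivity)]
  nlinarith [sq_nonneg (‖m‖ - ρ * ‖v‖), mul_le_mul_of_nonneg_left h hρ.le]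

lemma mul_log_minorant {ρ : ℝ} (hρ : 0 < ρ) (u : ℝ) :
    ρ * (1 + u) - Real.exp u ≤ ρ * Real.log ρ := by
  have h1 : Real.exp u = ρ * Real.exp (u - Real.log ρ) := by
    rw [Real.exp_sub, Real.exp_log hρ]
    field_simp
  have h2 := mul_le_mul_of_nonneg_left (Real.add_one_le_exp (u - Real.log ρ)) hρ.le
  rw [h1]
  linarith

lemma affineMinorant_le {d : ℕ} {γ : ℝ} (hγ : 1 < γ) (q : EuclideanSpace ℝ (Fin d) × ℝ × ℝ)
    {p : ℝ × EuclideanSpace ℝ (Fin d) × ℝ} (hρ : 0 < p.1) :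
    affineMinorant (γ - 1) q p ≤ ‖p.2.1‖ ^ 2 / (2 * p.1) +
      (1 / (γ - 1)) * p.1 ^ γ * Real.exp (p.2.2 / ((1 / (γ - 1)) * p.1)) := by
  rw [internalEnergy_eq hγ hρ]
  obtain ⟨v, t, u⟩ := q
  obtain ⟨ρ, m, S⟩ := p
  simp only [affineMinorant] at hρ ⊢
  have hk : 0 < γ - 1 := by linarith
  generalize γ - 1 = k at hk ⊢
  refine add_le_add (kinetic_minorant hρ v m) ?_
  rw [mul_assoc]
  refine mul_le_mul_of_nonneg_left ?_ (by positivity)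
  have hw : S + ρ * (1 + u) - Real.exp u ≤ ρ * (Real.log ρ + S / ρ) := by
    have := mul_log_minorant hρ u
    have h2 : ρ * (Real.log ρ + S / ρ) = ρ * Real.log ρ + S := by field_simp
    linarith
  generalize Real.log ρ + S / ρ = τ at hw ⊢
  have hexp : Real.exp (k * τ) = Real.exp (k * t) * Real.exp (k * (τ - t)) := by
    rw [← Real.exp_add]
    ring_nf
  calc _ ≤ Real.exp (k * t) * ((1 - k * t) * ρ + k * (ρ * τ)) := by gcongr
    _ = ρ * (Real.exp (k * t) * (k * (τ - t) + 1)) := by ring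
    _ ≤ ρ * (Real.exp (k * t) * Real.exp (k * (τ - t))) := by
      gcongr
      exact Real.add_one_le_exp _
    _ = _ := by rw [hexp]

/-- The minorant tangent at `p` itself attains the value of the energy. -/
lemma exists_affineMinorant_eq {d : ℕ} {γ : ℝ} (hγ : 1 < γ)
    {p : ℝ × EuclideanSpace ℝ (Fin d) × ℝ} (hρ : 0 < p.1) :
    ∃ q, affineMinorant (γ - 1) q p = ‖p.2.1‖ ^ 2 / (2 * p.1) +
      (1 / (γ - 1)) * p.1 ^ γ * Real.exp (p.2.2 / ((1 / (γ - 1)) * p.1)) := by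
  rw [internalEnergy_eq hγ hρ]
  obtain ⟨ρ, m, S⟩ := p
  simp only at hρ ⊢
  refine ⟨(ρ⁻¹ • m, Real.log ρ + S / ρ, Real.log ρ), ?_⟩
  have hk : γ - 1 ≠ 0 := by linarith
  simp only [affineMinorant, real_inner_smul_left, real_inner_self_eq_norm_sq, norm_smul,
    Real.exp_log hρ, Real.norm_eq_abs, abs_of_pos (inv_pos.2 hρ)]
  field_simp
  ring

/-- Off the effective domain of the energy the affine minorants are unbounded above. -/
lemma exists_le_affineMinorant {d : ℕ} {k : ℝ} (hk : 0 < k)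
    {p : ℝ × EuclideanSpace ℝ (Fin d) × ℝ} (hρ : ¬ 0 < p.1)
    (hp : ¬ (p.1 = 0 ∧ p.2.1 = 0 ∧ p.2.2 ≤ 0)) (N : ℝ) :
    ∃ q, N ≤ affineMinorant k q p := by
  obtain ⟨ρ, m, S⟩ := p
  simp only at hρ hp
  rcases (not_lt.1 hρ).lt_or_eq with hneg | rfl
  · -- The term `ρ * u` tends to `+∞` as `u → -∞`, while `exp u ≤ 1`.
    set b := (N - ρ / k - S - ρ + 1) / ρ with hb
    refine ⟨(0, 0, min 0 b), ?_⟩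
    have h1 : Real.exp (min 0 b) ≤ 1 := Real.exp_le_one_iff.2 (min_le_left _ _)
    have h2 : ρ * b ≤ ρ * min 0 b := mul_le_mul_of_nonpos_left (min_le_right _ _) hneg.le
    have h3 : ρ * b = N - ρ / k - S - ρ + 1 := by
      rw [hb]
      field_simp [hneg.ne]
    have h4 : affineMinorant k ((0 : EuclideanSpace ℝ (Fin d)), 0, min 0 b) (ρ, m, S) =
        ρ / k + (S + ρ * (1 + min 0 b) - Real.exp (min 0 b)) := by
      simp [affineMinorant]
      field_simp
    rw [h4]
    linarith
  · by_cases hm : m = 0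
    · -- With `exp u = S / 2` the minorant is `exp (k t) * (S / 2)`, unbounded in `t`.
      have hS : 0 < S := by
        by_contra h
        exact hp ⟨rfl, hm, not_lt.1 h⟩
      refine ⟨(0, 2 * N / (S * k), Real.log (S / 2)), ?_⟩
      have h4 : affineMinorant k ((0 : EuclideanSpace ℝ (Fin d)), 2 * N / (S * k),
          Real.log (S / 2)) (0, m, S) = Real.exp (k * (2 * N / (S * k))) * (S / 2) := by
        simp only [affineMinorant, Real.exp_log (half_pos hS), inner_zero_left, norm_zero]
        field_simp
        ring
      rw [h4]
      have h5 := mul_le_mul_of_nonneg_right (Real.add_one_le_exp (k * (2 * N / (S * k))))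
        (half_pos hS).le
      have h6 : (k * (2 * N / (S * k)) + 1) * (S / 2) = N + S / 2 := by field_simp
      linarith
    · -- The term `⟪v, m⟫` is unbounded along multiples `v` of `m`.
      have hm2 : ‖m‖ ^ 2 ≠ 0 := by simpa using hm
      refine ⟨(((N - S + 1) / ‖m‖ ^ 2) • m, 0, 0), le_of_eq ?_⟩
      simp only [affineMinorant, real_inner_smul_left, real_inner_self_eq_norm_sq]
      rw [div_mul_cancel₀ _ hm2]
      simp
      field_simp
      ring

theorem totalEnergy_eq_iSup (d : ℕ) {γ : ℝ} (hγ : 1 < γ) :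
    totalEnergy d γ = fun p => ⨆ q, ENNReal.ofReal (affineMinorant (γ - 1) q p) := by
  funext p
  have hk : 0 < γ - 1 := by linarith
  unfold totalEnergy
  split_ifs with hρ hp
  · refine le_antisymm ?_ (iSup_le fun q => ENNReal.ofReal_le_ofReal (affineMinorant_le hγ q hρ))
    obtain ⟨q, hq⟩ := exists_affineMinorant_eq hγ hρ
    rw [← hq]
    exact le_iSup (fun q => ENNReal.ofReal (affineMinorant (γ - 1) q p)) q
  · symm
    refine le_antisymm (iSup_le fun q => ?_) bot_le
    obtain ⟨h1, h2, h3⟩ := hp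
    refine (ENNReal.ofReal_of_nonpos ?_).le
    simp only [affineMinorant, h1, h2, inner_zero_right, zero_mul, mul_zero, zero_div, sub_zero,
      zero_add, add_zero]
    refine mul_nonpos_of_nonneg_of_nonpos (by positivity) ?_
    exact mul_nonpos_of_nonneg_of_nonpos hk.le (by linarith [Real.exp_pos q.2.2])
  · symm
    refine ENNReal.eq_top_of_forall_nnreal_le fun N => ?_
    obtain ⟨q, hq⟩ := exists_le_affineMinorant hk hρ hp N
    refine le_trans ?_ (le_iSup _ q)
    rw [← ENNReal.ofReal_coe_nnreal]
    exact ENNReal.ofReal_le_ofReal hq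

/-- the extended total energy is convex and lower semicontinuous on `ℝ^{d+2}`. -/
theorem totalEnergy_convex_lowerSemicontinuous (d : ℕ) (hd : 1 ≤ d) (γ : ℝ) (hγ : 1 < γ) :
    (∀ x y : ℝ × EuclideanSpace ℝ (Fin d) × ℝ, ∀ a : ℝ, 0 ≤ a → a ≤ 1 →
      totalEnergy d γ (a • x + (1 - a) • y) ≤
        ENNReal.ofReal a * totalEnergy d γ x + ENNReal.ofReal (1 - a) * totalEnergy d γ y) ∧
    LowerSemicontinuous (totalEnergy d γ) := by
  rw [totalEnergy_eq_iSup d hγ]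
  refine ⟨fun x y a ha0 ha1 => iSup_le fun q => ?_, lowerSemicontinuous_iSup fun q =>
    (ENNReal.continuous_ofReal.comp (continuous_affineMinorant _ q)).lowerSemicontinuous⟩
  rw [affineMinorant_combo]
  refine ENNReal.ofReal_add_le.trans ?_
  rw [ENNReal.ofReal_mul ha0, ENNReal.ofReal_mul (sub_nonneg.2 ha1)]
  gcongr
  · exact le_iSup (fun q => ENNReal.ofReal (affineMinorant (γ - 1) q x)) q
  · exact le_iSup (fun q => ENNReal.ofReal (affineMinorant (γ - 1) q y)) q
end

section
/- The total energy is strictly convex on the interior of its domain: for the function F(ρ,m,S) = |m|²/(2ρ) + c_v · ρ^γ · exp(S/(c_v ρ)) defined on {(ρ,m,S) ∈ ℝ × ℝ^d × ℝ : ρ > 0}, and for any two distinct points (ρ₁,m₁,S₁) ≠ (ρ₂,m₂,S₂) with ρ₁ > 0 and ρ₂ > 0 and any λ ∈ (0,1), one has F(λ(ρ₁,m₁,S₁) + (1−λ)(ρ₂,m₂,S₂)) < λ F(ρ₁,m₁,S₁) + (1−λ) F(ρ₂,m₂,S₂). -/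
/-!
Put `b = 1 - a` and let `ρ = a ρ₁ + b ρ₂` be the combined density. Both summands of the energy
are perspectives of convex functions.

* Kinetic part: the convexity defect of `‖m‖² / ρ` is exactly
  `a b ‖ρ₂ m₁ - ρ₁ m₂‖² / (ρ ρ₁ ρ₂)` (`kinetic_defect`), which is nonnegative and, when
  `ρ₁ = ρ₂`, vanishes only for `m₁ = m₂`.
* Internal part: `ρ^γ exp (S / (c_v ρ)) = ρ exp ((γ - 1) φ)` with `φ = log ρ + S / ρ`
  (`internal_eq`). With the weights `w₁ = a ρ₁ / ρ` and `w₂ = b ρ₂ / ρ`, the specific volume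
  `1 / ρ` and the specific entropy `S / ρ` are averages of those of the two states, so `φ` is
  convex in these variables by concavity of `log`, strictly so when `ρ₁ ≠ ρ₂`. When `ρ₁ = ρ₂` but
  `S₁ ≠ S₂`, the values `φ₁ ≠ φ₂` differ and strict convexity of `exp` applies. Hence the
  internal energy is strictly convex in `(ρ, S)` (`internal_lt`).

Distinct states differ either in `(ρ, S)`, where the internal part gives strictness, or only
in `m`, where the kinetic part does.
-/

/-- The total energy `F(ρ, m, S) = |m|²/(2ρ) + c_v ρ^γ exp(S/(c_v ρ))`, `c_v = 1/(γ-1)`,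
as a real-valued function (intended for `ρ > 0`). -/
noncomputable def totalEnergyFn (d : ℕ) (γ : ℝ) (p : ℝ × EuclideanSpace ℝ (Fin d) × ℝ) : ℝ :=
  ‖p.2.1‖ ^ 2 / (2 * p.1) +
    (1 / (γ - 1)) * p.1 ^ γ * Real.exp (p.2.2 / ((1 / (γ - 1)) * p.1))

/-- The convexity defect of `(ρ, m) ↦ ‖m‖² / (2ρ)`, in closed form. -/
lemma kinetic_defect {E : Type*} [NormedAddCommGroup E] [InnerProductSpace ℝ E]
    {a b r s : ℝ} (m n : E) (ha : 0 < a) (hb : 0 < b) (hr : 0 < r) (hs : 0 < s)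
    (hab : a + b = 1) :
    a * (‖m‖ ^ 2 / (2 * r)) + b * (‖n‖ ^ 2 / (2 * s)) =
      ‖a • m + b • n‖ ^ 2 / (2 * (a * r + b * s)) +
        a * b * ‖s • m - r • n‖ ^ 2 / (2 * (a * r + b * s) * r * s) := by
  have hρ : 0 < a * r + b * s := by positivity
  have h1 : ‖a • m + b • n‖ ^ 2 =
      a ^ 2 * ‖m‖ ^ 2 + 2 * (a * b * inner ℝ m n) + b ^ 2 * ‖n‖ ^ 2 := by
    rw [norm_add_sq_real, norm_smul, norm_smul, inner_smul_left, inner_smul_right,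
      mul_pow, mul_pow, Real.norm_eq_abs, Real.norm_eq_abs, sq_abs, sq_abs]
    simp only [conj_trivial]
    ring
  have h2 : ‖s • m - r • n‖ ^ 2 =
      s ^ 2 * ‖m‖ ^ 2 - 2 * (s * r * inner ℝ m n) + r ^ 2 * ‖n‖ ^ 2 := by
    rw [norm_sub_sq_real, norm_smul, norm_smul, inner_smul_left, inner_smul_right,
      mul_pow, mul_pow, Real.norm_eq_abs, Real.norm_eq_abs, sq_abs, sq_abs]
    simp only [conj_trivial]
    ring
  rw [h1, h2]
  obtain rfl : b = 1 - a := by linarith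
  have hρ' := hρ.ne'
  field_simp
  ring

lemma internal_eq {γ r : ℝ} (S : ℝ) (hγ : 1 < γ) (hr : 0 < r) :
    r ^ γ * Real.exp (S / ((1 / (γ - 1)) * r)) =
      r * Real.exp ((γ - 1) * (Real.log r + S / r)) := by
  have hg : γ - 1 ≠ 0 := by linarith
  have e : S / ((1 / (γ - 1)) * r) = (γ - 1) * (S / r) := by
    field_simp
  have hpow : r ^ γ = r * Real.exp ((γ - 1) * Real.log r) := by
    rw [Real.rpow_def_of_pos hr]
    nth_rewrite 2 [← Real.exp_log hr]
    rw [← Real.exp_add]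
    congr 1
    ring
  rw [e, hpow, mul_add, Real.exp_add, mul_assoc]

/-- Strict convexity in `(ρ, S)` of the internal energy, in the form `ρ exp (g (log ρ + S / ρ))`. -/
lemma internal_lt {a b r s g : ℝ} (S T : ℝ) (ha : 0 < a) (hb : 0 < b) (hr : 0 < r) (hs : 0 < s)
    (hab : a + b = 1) (hg : 0 < g) (hne : r ≠ s ∨ S ≠ T) :
    (a * r + b * s) *
        Real.exp (g * (Real.log (a * r + b * s) + (a * S + b * T) / (a * r + b * s))) <
      a * (r * Real.exp (g * (Real.log r + S / r))) +
        b * (s * Real.exp (g * (Real.log s + T / s))) := by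
  have hρ : 0 < a * r + b * s := by positivity
  set ρ := a * r + b * s with hρdef
  have hw₁ : 0 < a * r / ρ := by positivity
  have hw₂ : 0 < b * s / ρ := by positivity
  have hw : a * r / ρ + b * s / ρ = 1 := by
    rw [← add_div, ← hρdef, div_self hρ.ne']
  -- `1 / ρ` and `S / ρ` are weighted averages of their values at the two states.
  have hvol : (a * r / ρ) * r⁻¹ + (b * s / ρ) * s⁻¹ = ρ⁻¹ := by
    field_simp
    exact hab
  have hent : (a * r / ρ) * (S / r) + (b * s / ρ) * (T / s) = (a * S + b * T) / ρ := by
    field_simp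
  have hrhs : a * (r * Real.exp (g * (Real.log r + S / r))) +
        b * (s * Real.exp (g * (Real.log s + T / s))) =
      ρ * ((a * r / ρ) * Real.exp (g * (Real.log r + S / r)) +
        (b * s / ρ) * Real.exp (g * (Real.log s + T / s))) := by
    field_simp
  rw [hrhs]
  refine mul_lt_mul_of_pos_left ?_ hρ
  have havg : (a * r / ρ) * (g * (Real.log r + S / r)) + (b * s / ρ) * (g * (Real.log s + T / s)) =
      g * ((a * r / ρ) * Real.log r + (b * s / ρ) * Real.log s + (a * S + b * T) / ρ) := by
    rw [← hent]
    ring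
  by_cases hrs : r = s
  · subst hrs
    have hST : S ≠ T := hne.resolve_left (fun h => h rfl)
    have hρr : ρ = r := by rw [hρdef, ← add_mul, hab, one_mul]
    have hlog : (a * r / ρ) * Real.log r + (b * r / ρ) * Real.log r = Real.log ρ := by
      rw [← add_mul, hw, one_mul, hρr]
    have hφ : g * (Real.log r + S / r) ≠ g * (Real.log r + T / r) := by
      intro h
      have h' := add_left_cancel (mul_left_cancel₀ hg.ne' h)
      exact hST ((div_left_inj' hr.ne').1 h')
    have := strictConvexOn_exp.2 (Set.mem_univ _) (Set.mem_univ _) hφ hw₁ hw₂ hw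
    simp only [smul_eq_mul] at this
    rwa [havg, hlog] at this
  · have hlog := strictConcaveOn_log_Ioi.2 (Set.mem_Ioi.2 (inv_pos.2 hr))
      (Set.mem_Ioi.2 (inv_pos.2 hs)) (fun h => hrs (inv_injective h)) hw₁ hw₂ hw
    simp only [smul_eq_mul, hvol, Real.log_inv] at hlog
    have := convexOn_exp.2 (Set.mem_univ (g * (Real.log r + S / r)))
      (Set.mem_univ (g * (Real.log s + T / s))) hw₁.le hw₂.le hw
    simp only [smul_eq_mul] at this
    refine lt_of_lt_of_le (Real.exp_lt_exp.2 ?_) this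
    rw [havg]
    refine mul_lt_mul_of_pos_left ?_ hg
    linarith

/-- the total energy is strictly convex on the interior of its domain
`{ρ > 0}`. -/
theorem totalEnergyFn_strictConvexOn (d : ℕ) (hd : 1 ≤ d) (γ : ℝ) (hγ : 1 < γ)
    (x y : ℝ × EuclideanSpace ℝ (Fin d) × ℝ) (hx : 0 < x.1) (hy : 0 < y.1) (hxy : x ≠ y)
    (a : ℝ) (ha0 : 0 < a) (ha1 : a < 1) :
    totalEnergyFn d γ (a • x + (1 - a) • y) <
      a * totalEnergyFn d γ x + (1 - a) * totalEnergyFn d γ y := by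
  obtain ⟨r, m, S⟩ := x
  obtain ⟨s, n, T⟩ := y
  simp only at hx hy
  have hb : 0 < 1 - a := by linarith
  have hab : a + (1 - a) = 1 := by ring
  have hρ : 0 < a * r + (1 - a) * s := by positivity
  have hg : 0 < γ - 1 := by linarith
  have hc : 0 < 1 / (γ - 1) := by positivity
  simp only [totalEnergyFn, Prod.smul_mk, Prod.mk_add_mk, smul_eq_mul]
  rw [mul_assoc (1 / (γ - 1)) _ (Real.exp _), mul_assoc (1 / (γ - 1)) _ (Real.exp _),
    mul_assoc (1 / (γ - 1)) _ (Real.exp _), internal_eq _ hγ hρ, internal_eq _ hγ hx,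
    internal_eq _ hγ hy]
  have hkin := kinetic_defect m n ha0 hb hx hy hab
  by_cases hne : r ≠ s ∨ S ≠ T
  · have hint := mul_lt_mul_of_pos_left (internal_lt S T ha0 hb hx hy hab hg hne) hc
    have hdef : 0 ≤ a * (1 - a) * ‖s • m - r • n‖ ^ 2 /
        (2 * (a * r + (1 - a) * s) * r * s) := by positivity
    linarith
  · push Not at hne
    obtain ⟨rfl, rfl⟩ := hne
    have hmn : m ≠ n := fun h => hxy (by rw [h])
    have hnorm : 0 < ‖r • m - r • n‖ := by
      rw [← smul_sub]
      exact norm_pos_iff.2 (smul_ne_zero hx.ne' (sub_ne_zero.2 hmn))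
    have hdef : 0 < a * (1 - a) * ‖r • m - r • n‖ ^ 2 /
        (2 * (a * r + (1 - a) * r) * r * r) := by positivity
    have hr : a * r + (1 - a) * r = r := by ring
    have hS : a * S + (1 - a) * S = S := by ring
    rw [hr] at hkin hdef
    rw [hr, hS]
    linarith
end
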